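/- arXiv:2409.13680 — 2 statements merged into one kernel-verified Lean document; each statement's English description precedes it below -/
import Mathlib

section
/- Let G be a k-connected (k ≥ 1) finite simple graph with n ≥ 9 vertices, e edges, and minimum degree δ. If F(G) ≤ (n − k − 2)·δ³ + δ·(2(k + 2)²δ² − e²)/(k + 2), then G is traceable. -/
open Finset

/-- The first Zagreb index of a graph: the sum of the squares of the vertex degrees. -/
def zagreb1 {V : Type*} [Fintype V] (G : SimpleGraph V) [DecidableRel G.Adj] : ℝ :=
  ∑ u, (G.degree u : ℝ) ^ 2

/-- The forgotten topological index of a graph: the sum of the cubes of the vertex degrees. -/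
def forgottenIndex {V : Type*} [Fintype V] (G : SimpleGraph V) [DecidableRel G.Adj] : ℝ :=
  ∑ u, (G.degree u : ℝ) ^ 3

/-- The inverse degree of a graph: the sum of the reciprocals of the vertex degrees. -/
noncomputable def invDegree {V : Type*} [Fintype V] (G : SimpleGraph V) [DecidableRel G.Adj] : ℝ :=
  ∑ u, 1 / (G.degree u : ℝ)

/-- The independence number of a graph: the largest cardinality of a set of pairwise
nonadjacent vertices. -/
noncomputable def indepNum {V : Type*} [Fintype V] (G : SimpleGraph V) : ℕ :=
  sSup {k | ∃ s : Finset V, s.card = k ∧ ∀ u ∈ s, ∀ v ∈ s, ¬ G.Adj u v}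

/-- A graph is a regular balanced bipartite graph if its vertices can be partitioned into
two parts of equal size with every edge joining the two parts, and all vertices have the
same degree. -/
def IsRegularBalancedBipartite {V : Type*} [Fintype V] (G : SimpleGraph V) [DecidableRel G.Adj] : Prop :=
  ∃ (A : Finset V) (r : ℕ), 2 * A.card = Fintype.card V ∧
    (∀ u v, G.Adj u v → (u ∈ A ↔ v ∉ A)) ∧ G.IsRegularOfDegree r

/-- A graph is `k`-connected if it has more than `k` vertices and removing any set of
fewer than `k` vertices leaves a connected graph. -/
def IsKConnected {V : Type*} [Fintype V] (G : SimpleGraph V) (k : ℕ) : Prop :=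
  k < Fintype.card V ∧
    ∀ S : Finset V, S.card < k → (G.induce (↑S : Set V)ᶜ).Connected

/-- A graph is traceable if it has a Hamiltonian path. -/
def IsTraceable {V : Type*} [DecidableEq V] (G : SimpleGraph V) : Prop :=
  ∃ (u v : V) (p : G.Walk u v), p.IsHamiltonian

namespace SimpleGraph

variable {V : Type*} {G : SimpleGraph V} {l : List V} {d x y a b s t : V}

/-- A list of vertices is a longest path if it is the vertex sequence of a path and no path
has more vertices. -/
structure IsLongestPath (G : SimpleGraph V) (l : List V) : Prop where
  isChain : l.IsChain G.Adj
  nodup : l.Nodup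
  length_le : ∀ l' : List V, l'.IsChain G.Adj → l'.Nodup → l'.length ≤ l.length

/-- Two vertices are joined by a walk that avoids all vertices of a list. -/
def ReachableOff (G : SimpleGraph V) (l : List V) (x y : V) : Prop :=
  ∃ p : G.Walk x y, ∀ v ∈ p.support, v ∉ l

theorem ReachableOff.symm (h : G.ReachableOff l x y) : G.ReachableOff l y x := by
  obtain ⟨p, hp⟩ := h
  exact ⟨p.reverse, by simpa using hp⟩

theorem ReachableOff.trans {z : V} (h : G.ReachableOff l x y) (h' : G.ReachableOff l y z) :
    G.ReachableOff l x z := by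
  obtain ⟨p, hp⟩ := h
  obtain ⟨q, hq⟩ := h'
  refine ⟨p.append q, fun v hv ↦ ?_⟩
  rcases (Walk.mem_support_append_iff p q).1 hv with hv | hv
  exacts [hp v hv, hq v hv]

theorem ReachableOff.refl (hx : x ∉ l) : G.ReachableOff l x x :=
  ⟨.nil, by simpa using hx⟩

theorem ReachableOff.notMem (h : G.ReachableOff l x y) : y ∉ l :=
  h.choose_spec y h.choose.end_mem_support

theorem ReachableOff.adj (h : G.ReachableOff l d x) (hxy : G.Adj x y) (hy : y ∉ l) :
    G.ReachableOff l d y :=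
  h.trans ⟨hxy.toWalk, by simpa using ⟨h.notMem, hy⟩⟩

theorem ReachableOff.exists_list (h : G.ReachableOff l x y) :
    ∃ q : List V, q.IsChain G.Adj ∧ q.Nodup ∧ (∀ v ∈ q, v ∉ l) ∧
      q.head? = some x ∧ q.getLast? = some y := by
  classical
  obtain ⟨p, hp⟩ := h
  refine ⟨p.bypass.support, p.bypass.isChain_adj_support, p.bypass_isPath.support_nodup,
    fun v hv ↦ hp v (p.support_bypass_subset_support hv), ?_, ?_⟩
  · rw [List.head?_eq_some_head p.bypass.support_ne_nil, Walk.head_support]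
  · rw [List.getLast?_eq_some_getLast p.bypass.support_ne_nil, Walk.getLast_support]

theorem isChain_adj_reverse (h : l.IsChain G.Adj) : l.reverse.IsChain G.Adj := by
  rw [List.isChain_reverse]
  exact h.imp fun _ _ h ↦ h.symm

/-- `s` is the immediate successor of `a` in the list `l`. -/
def IsSucc (l : List V) (a s : V) : Prop :=
  ∃ A B : List V, l = A ++ B ∧ A.getLast? = some a ∧ B.head? = some s

theorem IsSucc.mem_right (h : IsSucc l a s) : s ∈ l := by
  obtain ⟨A, B, rfl, -, hB⟩ := h
  exact List.mem_append_right _ (List.mem_of_mem_head? hB)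

theorem IsSucc.exists_getElem (h : IsSucc l a s) :
    ∃ (i : ℕ) (hi : i + 1 < l.length), l[i] = a ∧ l[i + 1] = s := by
  obtain ⟨A, B, rfl, hA, hB⟩ := h
  obtain ⟨A, rfl⟩ := List.getLast?_eq_some_iff.1 hA
  obtain ⟨B, rfl⟩ := List.head?_eq_some_iff.1 hB
  exact ⟨A.length, by simp, by simp, by simp⟩

theorem IsSucc.left_unique (hl : l.Nodup) (ha : IsSucc l a s) (hb : IsSucc l b s) : a = b := by
  obtain ⟨i, hi, rfl, hs⟩ := ha.exists_getElem
  obtain ⟨j, hj, rfl, hs'⟩ := hb.exists_getElem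
  have := (hl.getElem_inj_iff).1 (hs.trans hs'.symm)
  grind

theorem IsSucc.ne_head (hl : l.Nodup) (h : IsSucc l a s) : l.head? ≠ some s := by
  obtain ⟨i, hi, rfl, hs⟩ := h.exists_getElem
  intro h0
  rw [List.head?_eq_getElem?, List.getElem?_eq_some_iff] at h0
  obtain ⟨h0, h1⟩ := h0
  have := (hl.getElem_inj_iff).1 (h1.trans hs.symm)
  omega

/-- Two successor pairs of a list split it into three blocks, in one of the two orders. -/
theorem IsSucc.split (ha : IsSucc l a s) (hb : IsSucc l b t) (hne : s ≠ t) :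
    (∃ A M B : List V, l = A ++ M ++ B ∧ A.getLast? = some a ∧ M.head? = some s ∧
      M.getLast? = some b ∧ B.head? = some t) ∨
    (∃ A M B : List V, l = A ++ M ++ B ∧ A.getLast? = some b ∧ M.head? = some t ∧
      M.getLast? = some a ∧ B.head? = some s) := by
  obtain ⟨A, B, hl, hA, hB⟩ := ha
  obtain ⟨A', B', hl', hA', hB'⟩ := hb
  rcases List.append_eq_append_iff.1 (hl.symm.trans hl') with ⟨M, rfl, rfl⟩ | ⟨M, rfl, rfl⟩
  · left
    have hM : M ≠ [] := by rintro rfl; grind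
    exact ⟨A, M, B', hl', hA, List.head?_append_of_ne_nil M hM ▸ hB,
      List.getLast?_append_of_ne_nil A hM ▸ hA', hB'⟩
  · right
    have hM : M ≠ [] := by rintro rfl; grind
    exact ⟨A', M, B, hl, hA', List.head?_append_of_ne_nil M hM ▸ hB',
      List.getLast?_append_of_ne_nil A' hM ▸ hA, hB⟩

namespace IsLongestPath

theorem exists_isSucc (hl : G.IsLongestPath l) (ha : a ∈ l) (hx : x ∉ l) (hax : G.Adj a x) :
    ∃ s, IsSucc l a s := by
  obtain ⟨A, B, rfl⟩ := List.append_of_mem ha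
  cases B with
  | nil =>
    exfalso
    have := hl.length_le (A ++ [a] ++ [x])
      (List.isChain_append.2 ⟨hl.isChain, by simp, by simpa using hax⟩)
      (by have := hl.nodup; grind)
    simp at this
  | cons s B => exact ⟨s, A ++ [a], s :: B, by simp, by simp, by simp⟩

theorem head_not_adj (hl : G.IsLongestPath l) (ha : l.head? = some a) (hx : x ∉ l) :
    ¬ G.Adj a x := by
  intro hax
  have := hl.length_le (x :: l)
    (List.isChain_cons.2 ⟨by simpa [ha] using hax.symm, hl.isChain⟩)
    (List.nodup_cons.2 ⟨hx, hl.nodup⟩)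
  simp at this

theorem succ_not_adj (hl : G.IsLongestPath l) (hs : IsSucc l a s) (hxy : G.ReachableOff l x y)
    (hax : G.Adj a x) : ¬ G.Adj s y := by
  intro hsy
  obtain ⟨q, hqc, hqn, hqd, hqx, hqy⟩ := hxy.exists_list
  obtain ⟨A, B, rfl, hA, hB⟩ := hs
  obtain ⟨hAc, hBc, -⟩ := List.isChain_append.1 hl.isChain
  have := hl.length_le (A ++ (q ++ B))
    (by simp [List.isChain_append, hAc, hBc, hqc, hA, hB, hqx, hqy, hax, hsy.symm])
    (by have := hl.nodup; grind)
  have : q = [] := by simpa using this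
  simp [this] at hqx

theorem succ_not_adj_head {v : V} (hl : G.IsLongestPath l) (hv : l.head? = some v)
    (hs : IsSucc l a s) (hx : x ∉ l) (hax : G.Adj a x) : ¬ G.Adj v s := by
  intro hvs
  obtain ⟨A, B, rfl, hA, hB⟩ := hs
  obtain ⟨hAc, hBc, -⟩ := List.isChain_append.1 hl.isChain
  have hAv : A.head? = some v := by cases A <;> simp_all
  have := hl.length_le (x :: (A.reverse ++ B))
    (by simp [List.isChain_append, List.isChain_cons, isChain_adj_reverse hAc, hBc, hA, hB, hAv,
          hvs, hax.symm])
    (by have := hl.nodup; grind)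
  simp at this

theorem succ_not_adj_succ (hl : G.IsLongestPath l) (hs : IsSucc l a s) (ht : IsSucc l b t)
    (hxy : G.ReachableOff l x y) (hax : G.Adj a x) (hby : G.Adj b y) : ¬ G.Adj s t := by
  intro hst
  have key : ∀ {a b s t x y : V}, G.ReachableOff l x y → G.Adj a x → G.Adj b y → G.Adj s t →
      ¬ ∃ A M B : List V, l = A ++ M ++ B ∧ A.getLast? = some a ∧ M.head? = some s ∧
        M.getLast? = some b ∧ B.head? = some t := by
    rintro a b s t x y hxy hax hby hst ⟨A, M, B, rfl, hA, hM, hM', hB⟩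
    obtain ⟨q, hqc, hqn, hqd, hqx, hqy⟩ := hxy.exists_list
    obtain ⟨hAM, hBc, -⟩ := List.isChain_append.1 hl.isChain
    obtain ⟨hAc, hMc, -⟩ := List.isChain_append.1 hAM
    have := hl.length_le (A ++ (q ++ (M.reverse ++ B)))
      (by simp [List.isChain_append, isChain_adj_reverse hMc, hAc, hBc, hqc, hA, hB, hM, hM',
            hqx, hqy, hax, hby.symm, hst])
      (by have := hl.nodup; grind)
    have : q = [] := List.length_eq_zero_iff.1 (by
      simp only [List.length_append, List.length_reverse] at this; omega)
    simp [this] at hqx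
  rcases hs.split ht hst.ne with h | h
  · exact key hxy hax hby hst h
  · exact key hxy.symm hby hax hst.symm h

end IsLongestPath

theorem exists_isLongestPath [Fintype V] (G : SimpleGraph V) : ∃ l, G.IsLongestPath l := by
  let S : Set ℕ := {m | ∃ l : List V, l.IsChain G.Adj ∧ l.Nodup ∧ l.length = m}
  have hS : BddAbove S := ⟨Fintype.card V, by rintro _ ⟨l, -, hl, rfl⟩; exact hl.length_le_card⟩
  obtain ⟨l, hc, hn, hlen⟩ := Nat.sSup_mem (s := S) ⟨0, [], by simp⟩ hS
  exact ⟨l, hc, hn, fun l' hc' hn' ↦ hlen ▸ le_csSup hS ⟨l', hc', hn', rfl⟩⟩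

/-- A vertex missed by a longest path of a `k`-connected graph lies, together with the first
vertex of the path, in an independent set of at least `k + 2` vertices that is otherwise
contained in the path. -/
theorem IsLongestPath.exists_indep [Fintype V] [DecidableEq V] {k : ℕ} {v : V}
    (hl : G.IsLongestPath l) (hconn : IsKConnected G k) (hv : l.head? = some v) (hd : d ∉ l) :
    ∃ I : Finset V, d ∈ I ∧ v ∈ I ∧ (∀ u ∈ I, u = d ∨ u ∈ l) ∧ k + 2 ≤ I.card ∧
      ∀ u ∈ I, ∀ w ∈ I, ¬ G.Adj u w := by
  classical
  have hvl : v ∈ l := List.mem_of_mem_head? hv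
  let N : Finset V := {a | a ∈ l ∧ ∃ x, G.ReachableOff l d x ∧ G.Adj a x}
  have hN {a : V} : a ∈ N ↔ a ∈ l ∧ ∃ x, G.ReachableOff l d x ∧ G.Adj a x := by simp [N]
  have hkN : k ≤ N.card := by
    by_contra! hlt
    have hdN : d ∉ N := fun h ↦ hd (hN.1 h).1
    have hvN : v ∉ N := fun h ↦ by
      obtain ⟨-, x, hx, hvx⟩ := hN.1 h
      exact hl.head_not_adj hv hx.notMem hvx
    obtain ⟨p⟩ := (hconn.2 N hlt).preconnected ⟨d, by simpa using hdN⟩ ⟨v, by simpa using hvN⟩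
    have key : ∀ {x y : ((N : Set V)ᶜ : Set V)}, (G.induce (N : Set V)ᶜ).Walk x y →
        G.ReachableOff l d x → G.ReachableOff l d y := by
      intro x y p
      induction p with
      | nil => exact id
      | @cons x y z hxy p ih =>
        refine fun hx ↦ ih (hx.adj hxy fun hy ↦ y.2 ?_)
        exact hN.2 ⟨hy, x, hx, hxy.symm⟩
    exact (key p (.refl hd)).notMem hvl
  have hsucc : ∀ a : N, ∃ s, IsSucc l a s := fun a ↦ by
    obtain ⟨hal, x, hx, hax⟩ := hN.1 a.2
    exact hl.exists_isSucc hal hx.notMem hax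
  choose f hf using hsucc
  have hinj : Function.Injective f := fun a b hab ↦
    Subtype.ext ((hf a).left_unique hl.nodup (hab ▸ hf b))
  have hmem {u : V} (hu : u ∈ Finset.univ.image f) :
      ∃ a x, IsSucc l a u ∧ G.ReachableOff l d x ∧ G.Adj a x := by
    obtain ⟨a, -, rfl⟩ := Finset.mem_image.1 hu
    obtain ⟨-, x, hx, hax⟩ := hN.1 a.2
    exact ⟨a, x, hf a, hx, hax⟩
  refine ⟨insert d (insert v (Finset.univ.image f)), by simp, by simp, ?_, ?_, ?_⟩
  · intro u hu
    rcases Finset.mem_insert.1 hu with rfl | hu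
    · exact .inl rfl
    rcases Finset.mem_insert.1 hu with rfl | hu
    · exact .inr hvl
    obtain ⟨a, x, hs, -⟩ := hmem hu
    exact .inr hs.mem_right
  · rw [Finset.card_insert_of_notMem, Finset.card_insert_of_notMem,
      Finset.card_image_of_injective _ hinj, Finset.card_univ, Fintype.card_coe]
    · omega
    · intro h
      obtain ⟨a, x, hs, -⟩ := hmem h
      exact hs.ne_head hl.nodup hv
    · intro h
      rcases Finset.mem_insert.1 h with rfl | h
      · exact hd hvl
      obtain ⟨a, x, hs, -⟩ := hmem h
      exact hd hs.mem_right
  · have hdv : ¬ G.Adj d v := fun h ↦ hl.head_not_adj hv hd h.symm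
    have hds : ∀ u ∈ Finset.univ.image f, ¬ G.Adj d u := fun u hu h ↦ by
      obtain ⟨a, x, hs, hx, hax⟩ := hmem hu
      exact hl.succ_not_adj hs hx.symm hax h.symm
    have hvs : ∀ u ∈ Finset.univ.image f, ¬ G.Adj v u := fun u hu h ↦ by
      obtain ⟨a, x, hs, hx, hax⟩ := hmem hu
      exact hl.succ_not_adj_head hv hs hx.notMem hax h
    have hss : ∀ u ∈ Finset.univ.image f, ∀ w ∈ Finset.univ.image f, ¬ G.Adj u w := by
      intro u hu w hw
      obtain ⟨a, x, hs, hx, hax⟩ := hmem hu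
      obtain ⟨b, y, ht, hy, hby⟩ := hmem hw
      exact hl.succ_not_adj_succ hs ht (hx.symm.trans hy) hax hby
    intro u hu w hw
    simp only [Finset.mem_insert] at hu hw
    rcases hu with rfl | rfl | hu <;> rcases hw with rfl | rfl | hw
    · exact G.irrefl
    · exact hdv
    · exact hds w hw
    · exact fun h ↦ hdv h.symm
    · exact G.irrefl
    · exact hvs w hw
    · exact fun h ↦ hds u hu h.symm
    · exact fun h ↦ hvs u hu h.symm
    · exact hss u hu w hw

theorem isTraceable_of_forall_mem [DecidableEq V] (hc : l.IsChain G.Adj) (hn : l.Nodup)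
    (hne : l ≠ []) (h : ∀ v, v ∈ l) : IsTraceable G :=
  ⟨_, _, Walk.ofSupport l hne hc, Walk.IsPath.isHamiltonian_of_mem
    (Walk.IsPath.mk' (by simpa using hn)) (by simpa using h)⟩

/-- The degrees over an independent set sum to at most the number of edges, and if they sum to
all edges then every edge meets the set. -/
theorem sum_degree_le_of_indep [Fintype V] [DecidableEq V] [DecidableRel G.Adj] {I : Finset V}
    (hI : ∀ u ∈ I, ∀ v ∈ I, ¬ G.Adj u v) :
    ∑ u ∈ I, G.degree u ≤ G.edgeFinset.card ∧
      (G.edgeFinset.card ≤ ∑ u ∈ I, G.degree u → ∀ u v, G.Adj u v → u ∈ I ∨ v ∈ I) := by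
  have hdisj : (I : Set V).PairwiseDisjoint fun u ↦ G.incidenceFinset u := by
    intro u hu v hv huv
    refine Finset.disjoint_left.2 fun e heu hev ↦ hI u hu v hv ?_
    rw [mem_incidenceFinset] at heu hev
    exact G.adj_of_mem_incidenceSet huv heu hev
  have hcard : ∑ u ∈ I, G.degree u = (I.biUnion fun u ↦ G.incidenceFinset u).card := by
    rw [Finset.card_biUnion hdisj]
    simp
  have hsub : (I.biUnion fun u ↦ G.incidenceFinset u) ⊆ G.edgeFinset :=
    Finset.biUnion_subset.2 fun u _ ↦ G.incidenceFinset_subset u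
  rw [hcard]
  refine ⟨Finset.card_le_card hsub, fun hle u v huv ↦ ?_⟩
  have huv' : s(u, v) ∈ I.biUnion fun u ↦ G.incidenceFinset u := by
    rw [Finset.eq_of_subset_of_card_le hsub hle]
    simpa using huv
  obtain ⟨w, hw, he⟩ := Finset.mem_biUnion.1 huv'
  rw [mem_incidenceFinset] at he
  rcases Sym2.mem_iff.1 he.2 with rfl | rfl
  exacts [.inl hw, .inr hw]

/-- In a list whose entries alternate with respect to a predicate and whose first entry
satisfies it, at most half of the entries fail it. -/
theorem countP_not_le_countP_of_isChain {R : V → V → Prop} {p : V → Bool}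
    (hR : ∀ u v, R u v → p v = !p u) :
    ∀ l : List V, l.IsChain R → (∀ v ∈ l.head?, p v) → l.countP (fun v ↦ !p v) ≤ l.countP p
  | [], _, _ => by simp
  | [u], _, h => by simp_all
  | u :: v :: l, hc, h => by
    have hu : p u = true := by simpa using h
    have hv : p v = false := by simpa [hu] using hR u v hc.rel
    have ih := countP_not_le_countP_of_isChain hR l hc.of_cons.of_cons (by
      intro w hw
      simpa [hv] using hR v w ((List.isChain_cons.1 hc.of_cons).1 w hw))
    simpa [List.countP_cons, hu, hv] using ih

/-- A `k`-connected graph is traceable as soon as every independent set of at least `k + 2`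
vertices has exactly `k + 2` vertices and meets every edge, and there are at least `2k + 4`
vertices. -/
theorem isTraceable_of_indep_forall [Fintype V] [DecidableEq V] {k : ℕ}
    (hk : 1 ≤ k) (hconn : IsKConnected G k)
    (hI : ∀ I : Finset V, k + 2 ≤ I.card → (∀ u ∈ I, ∀ v ∈ I, ¬ G.Adj u v) →
      2 * (k + 2) ≤ Fintype.card V ∧ I.card = k + 2 ∧ ∀ u v, G.Adj u v → u ∈ I ∨ v ∈ I) :
    IsTraceable G := by
  obtain ⟨l, hl⟩ := G.exists_isLongestPath
  obtain ⟨z⟩ : Nonempty V := Fintype.card_pos_iff.1 (by have := hconn.1; omega)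
  have hne : l ≠ [] := by
    rintro rfl
    simpa using hl.length_le [z] (by simp) (by simp)
  by_contra hnt
  obtain ⟨d, hd⟩ : ∃ d, d ∉ l := by
    by_contra! h
    exact hnt (isTraceable_of_forall_mem hl.isChain hl.nodup hne h)
  have hv := List.head?_eq_some_head hne
  set v := l.head hne
  obtain ⟨X, hdX, hvX, hXl, hXc, hXi⟩ := hl.exists_indep hconn hv hd
  obtain ⟨hn, hXc', hXe⟩ := hI X hXc hXi
  have hflip : ∀ u w, G.Adj u w → (w ∈ X ↔ u ∉ X) := fun u w h ↦
    ⟨fun hw hu ↦ hXi u hu w hw h, fun hu ↦ (hXe u w h).resolve_left hu⟩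
  by_cases hY : ∀ w ∉ X, w ∈ l
  · have hcount := countP_not_le_countP_of_isChain (R := G.Adj) (p := fun u ↦ decide (u ∈ X))
      (fun u w h ↦ by simp [hflip u w h]) l hl.isChain (by simp [hv, hvX])
    have h1 : l.countP (fun u ↦ decide (u ∈ X)) ≤ (X.erase d).card := by
      rw [List.countP_eq_length_filter, ← List.toFinset_card_of_nodup (hl.nodup.filter _)]
      refine Finset.card_le_card fun u hu ↦ ?_
      simp only [List.toFinset_filter, Finset.mem_filter, List.mem_toFinset,
        decide_eq_true_eq] at hu
      exact Finset.mem_erase.2 ⟨fun h ↦ hd (h ▸ hu.1), hu.2⟩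
    have h2 : Xᶜ.card ≤ l.countP (fun u ↦ !decide (u ∈ X)) := by
      rw [List.countP_eq_length_filter, ← List.toFinset_card_of_nodup (hl.nodup.filter _)]
      refine Finset.card_le_card fun u hu ↦ ?_
      have hu := Finset.mem_compl.1 hu
      simp [hu, hY u hu]
    rw [Finset.card_erase_of_mem hdX] at h1
    rw [Finset.card_compl] at h2
    omega
  · push Not at hY
    obtain ⟨w, hwX, hwl⟩ := hY
    obtain ⟨I, hwI, hvI, -, hIc, hIi⟩ := hl.exists_indep hconn hv hwl
    obtain ⟨-, -, hIe⟩ := hI I hIc hIi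
    have hflip' : ∀ u w, G.Adj u w → (w ∈ I ↔ u ∉ I) := fun u w h ↦
      ⟨fun hw hu ↦ hIi u hu w hw h, fun hu ↦ (hIe u w h).resolve_left hu⟩
    have key : ∀ {x y : ((↑(∅ : Finset V) : Set V)ᶜ : Set V)},
        (G.induce (↑(∅ : Finset V) : Set V)ᶜ).Walk x y →
        ((x : V) ∈ X ↔ (x : V) ∈ I) → ((y : V) ∈ X ↔ (y : V) ∈ I) := by
      intro x y p
      induction p with
      | nil => exact id
      | @cons x y z hxy p ih =>
        intro hx
        have hxy : G.Adj x y := hxy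
        exact ih (by rw [hflip _ _ hxy, hflip' _ _ hxy, hx])
    obtain ⟨p⟩ := (hconn.2 ∅ (by rw [Finset.card_empty]; omega)).preconnected
      ⟨v, by simp⟩ ⟨w, by simp⟩
    exact hwX ((key p (by simp [hvX, hvI])).2 hwI)

/-- In a `k`-connected graph with `k ≥ 1` all degrees are positive. -/
theorem minDegree_pos_of_isKConnected [Fintype V] [DecidableRel G.Adj] {k : ℕ}
    (hk : 1 ≤ k) (hconn : IsKConnected G k) : 0 < G.minDegree := by
  have : Nontrivial V := Fintype.one_lt_card_iff_nontrivial.1 (hk.trans_lt hconn.1)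
  refine Preconnected.minDegree_pos_of_nontrivial fun u v ↦ ?_
  obtain ⟨p⟩ := (hconn.2 ∅ (by rw [Finset.card_empty]; omega)).preconnected
    ⟨u, by simp⟩ ⟨v, by simp⟩
  exact ⟨p.map (Embedding.induce _).toHom⟩

end SimpleGraph

open SimpleGraph

/-- An upper bound on the forgotten index forces equality throughout once an independent set of
`m` vertices exists: the graph is regular and the set accounts for every edge. -/
theorem regular_and_card_edgeFinset_of_forgottenIndex_le {V : Type*} [Fintype V] [DecidableEq V]
    {G : SimpleGraph V} [DecidableRel G.Adj] {m : ℕ} (hm : 0 < m)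
    (hδ : 0 < G.minDegree)
    (h : forgottenIndex G ≤ ((Fintype.card V : ℝ) - m) * (G.minDegree : ℝ) ^ 3
        + (G.minDegree : ℝ) * (2 * (m : ℝ) ^ 2 * (G.minDegree : ℝ) ^ 2
            - (G.edgeFinset.card : ℝ) ^ 2) / (m : ℝ))
    {J : Finset V} (hJ : ∀ u ∈ J, ∀ v ∈ J, ¬ G.Adj u v) (hJm : J.card = m) :
    (∀ u, G.degree u = G.minDegree) ∧ G.edgeFinset.card = m * G.minDegree := by
  have hle : m * G.minDegree ≤ G.edgeFinset.card := by
    refine le_trans ?_ (sum_degree_le_of_indep hJ).1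
    rw [← hJm, ← smul_eq_mul]
    exact Finset.card_nsmul_le_sum _ _ _ fun u _ ↦ G.minDegree_le_degree u
  have hm' : (0 : ℝ) < m := by exact_mod_cast hm
  have hδ' : (0 : ℝ) < G.minDegree := by exact_mod_cast hδ
  have hle' : (m : ℝ) * G.minDegree ≤ G.edgeFinset.card := by exact_mod_cast hle
  have hF : (Fintype.card V : ℝ) * (G.minDegree : ℝ) ^ 3 ≤ forgottenIndex G := by
    rw [forgottenIndex, ← nsmul_eq_mul]
    refine Finset.card_nsmul_le_sum _ _ _ fun u _ ↦ ?_
    have : (G.minDegree : ℝ) ≤ G.degree u := by exact_mod_cast G.minDegree_le_degree u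
    gcongr
  set δ := (G.minDegree : ℝ)
  set e := (G.edgeFinset.card : ℝ)
  have hrhs : ((Fintype.card V : ℝ) - m) * δ ^ 3 + δ * (2 * (m : ℝ) ^ 2 * δ ^ 2 - e ^ 2) / m
      = Fintype.card V * δ ^ 3 - δ / m * (e ^ 2 - (m * δ) ^ 2) := by
    field_simp
    ring
  rw [hrhs] at h
  have hpos : 0 < δ / m := by positivity
  have hsq : (m * δ) ^ 2 ≤ e ^ 2 := by gcongr
  have hsq' : e ^ 2 ≤ (m * δ) ^ 2 := by
    by_contra! hlt
    have := mul_pos hpos (sub_pos.2 hlt)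
    linarith
  have he : e ≤ m * δ := (sq_le_sq₀ (by positivity) (by positivity)).1 hsq'
  refine ⟨?_, le_antisymm (by simp only [e, δ] at he; exact_mod_cast he) hle⟩
  by_contra! hne
  obtain ⟨w, hw⟩ := hne
  have hlt : ∑ _u : V, δ ^ 3 < forgottenIndex G := by
    refine Finset.sum_lt_sum (fun u _ ↦ ?_) ⟨w, Finset.mem_univ w, ?_⟩
    · have : δ ≤ G.degree u := Nat.cast_le.2 (G.minDegree_le_degree u)
      gcongr
    · have : δ < G.degree w :=
        Nat.cast_lt.2 (lt_of_le_of_ne (G.minDegree_le_degree w) hw.symm)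
      gcongr
  rw [Finset.sum_const, Finset.card_univ, nsmul_eq_mul] at hlt
  have := mul_nonneg hpos.le (sub_nonneg.2 hsq)
  linarith

/-- If `G` is a `k`-connected (`k ≥ 1`) graph with `n ≥ 9` vertices, `e` edges, and minimum
degree `δ`, and `F(G) ≤ (n − k − 2)δ³ + δ(2(k+2)²δ² − e²)/(k+2)`, then `G` is traceable. -/
theorem stmt12 {V : Type*} [Fintype V] [DecidableEq V] (G : SimpleGraph V) [DecidableRel G.Adj]
    (k : ℕ) (hk : 1 ≤ k) (hconn : IsKConnected G k) (hn : 9 ≤ Fintype.card V)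
    (h : forgottenIndex G ≤ ((Fintype.card V : ℝ) - k - 2) * (G.minDegree : ℝ) ^ 3
        + (G.minDegree : ℝ) * (2 * ((k : ℝ) + 2) ^ 2 * (G.minDegree : ℝ) ^ 2
            - (G.edgeFinset.card : ℝ) ^ 2) / ((k : ℝ) + 2)) :
    IsTraceable G := by
  have hδ := minDegree_pos_of_isKConnected hk hconn
  refine isTraceable_of_indep_forall hk hconn fun I hIc hIi ↦ ?_
  obtain ⟨J, hJI, hJc⟩ := Finset.exists_subset_card_eq hIc
  obtain ⟨hreg, he⟩ := regular_and_card_edgeFinset_of_forgottenIndex_le (m := k + 2) (by omega) hδ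
    (by push_cast; rwa [← sub_sub]) (fun u hu v hv ↦ hIi u (hJI hu) v (hJI hv)) hJc
  obtain ⟨hsum, hcover⟩ := sum_degree_le_of_indep hIi
  have hIsum : ∑ u ∈ I, G.degree u = I.card * G.minDegree := by simp [hreg]
  have hIcard : I.card = k + 2 := by
    rw [hIsum, he] at hsum
    exact le_antisymm (Nat.le_of_mul_le_mul_right hsum hδ) hIc
  refine ⟨?_, hIcard, hcover (by rw [hIsum, he, hIcard])⟩
  have htotal := G.sum_degrees_eq_twice_card_edges
  simp only [hreg, Finset.sum_const, Finset.card_univ, smul_eq_mul, he, ← mul_assoc] at htotal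
  exact (Nat.eq_of_mul_eq_mul_right hδ htotal).ge
end

section
/- Let G be a k-connected (k ≥ 1) finite simple graph with n ≥ 9 vertices, e edges, minimum degree δ ≥ 1, and maximum degree Δ. If Inv(G) ≤ (n − k − 2)/Δ + (2(k + 2)²δ² − e²)/((k + 2)·Δ³), then G is traceable. -/
open Finset

/-- A list of distinct vertices, consecutive ones adjacent, of the largest possible length. -/
def IsLongestPathList {V : Type*} (G : SimpleGraph V) (l : List V) : Prop :=
  l.IsChain G.Adj ∧ l.Nodup ∧
    ∀ l' : List V, l'.IsChain G.Adj → l'.Nodup → l'.length ≤ l.length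

/-- Two vertices are linked off `l` if some walk between them misses `l`. -/
def LinkedOff {V : Type*} (G : SimpleGraph V) (l : List V) (x y : V) : Prop :=
  ∃ p : G.Walk x y, ∀ w ∈ p.support, w ∉ l

section LongestPath

variable {V : Type*} {G : SimpleGraph V} {l : List V}

theorem exists_isLongestPathList [Fintype V] (G : SimpleGraph V) :
    ∃ l, IsLongestPathList G l := by
  classical
  let P : ℕ → Prop := fun n => ∃ l : List V, l.IsChain G.Adj ∧ l.Nodup ∧ l.length = n
  have h0 : P 0 := ⟨[], by simp, by simp, rfl⟩
  obtain ⟨l, hc, hd, hl⟩ := Nat.findGreatest_spec (Nat.zero_le (Fintype.card V)) h0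
  refine ⟨l, hc, hd, fun l' hc' hd' => ?_⟩
  rw [hl]
  exact Nat.le_findGreatest hd'.length_le_card ⟨l', hc', hd', rfl⟩

theorem LinkedOff.symm {x y : V} (h : LinkedOff G l x y) : LinkedOff G l y x := by
  obtain ⟨p, hp⟩ := h
  exact ⟨p.reverse, by simpa using hp⟩

theorem LinkedOff.trans {x y z : V} (h : LinkedOff G l x y) (h' : LinkedOff G l y z) :
    LinkedOff G l x z := by
  obtain ⟨p, hp⟩ := h
  obtain ⟨q, hq⟩ := h'
  refine ⟨p.append q, fun w hw => ?_⟩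
  rcases (SimpleGraph.Walk.mem_support_append_iff p q).1 hw with hw | hw
  exacts [hp w hw, hq w hw]

theorem LinkedOff.refl {x : V} (hx : x ∉ l) : LinkedOff G l x x :=
  ⟨.nil, by simpa using hx⟩

theorem LinkedOff.right_notMem {x y : V} (h : LinkedOff G l x y) : y ∉ l := by
  obtain ⟨p, hp⟩ := h
  exact hp y p.end_mem_support

theorem LinkedOff.adj_right {x y z : V} (h : LinkedOff G l x y) (hyz : G.Adj y z) (hz : z ∉ l) :
    LinkedOff G l x z :=
  h.trans ⟨hyz.toWalk, by
    have := h.right_notMem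
    simp [SimpleGraph.Adj.toWalk, this, hz]⟩

/-- Linked vertices are joined by a nonempty path missing `l`. -/
theorem LinkedOff.exists_path {x y : V} (h : LinkedOff G l x y) :
    ∃ c : List V, c.IsChain G.Adj ∧ c.Nodup ∧ c.Disjoint l ∧
      c.head? = some x ∧ c.getLast? = some y ∧ c ≠ [] := by
  classical
  obtain ⟨p, hp⟩ := h
  refine ⟨p.bypass.support, p.bypass.isChain_adj_support, p.bypass_isPath.support_nodup,
    fun w hw hwl => hp w (p.support_bypass_subset_support hw) hwl, ?_, ?_,
    p.bypass.support_ne_nil⟩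
  · rw [List.head?_eq_some_head p.bypass.support_ne_nil, p.bypass.head_support]
  · rw [List.getLast?_eq_some_getLast p.bypass.support_ne_nil, p.bypass.getLast_support]

/-- A longest path cannot be lengthened by inserting a detour between two consecutive pieces. -/
theorem IsLongestPathList.not_insert {A C : List V} (hl : IsLongestPathList G (A ++ C))
    {x y : V} (hxy : LinkedOff G (A ++ C) x y) (hA : ∀ a ∈ A.getLast?, G.Adj a x)
    (hC : ∀ c ∈ C.head?, G.Adj y c) : False := by
  obtain ⟨c, hc, hcd, hdis, hx, hy, hne⟩ := hxy.exists_path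
  obtain ⟨hch, hnd, hmax⟩ := hl
  have hp : (A ++ (c ++ C)).Perm (c ++ (A ++ C)) := by
    simpa using (List.perm_append_comm (l₁ := A) (l₂ := c)).append_right C
  have key := hmax (A ++ (c ++ C)) ?_ (hp.nodup_iff.2 (hcd.append hnd hdis))
  · have := List.length_pos_of_ne_nil hne
    simp only [List.length_append] at key
    omega
  · rw [List.isChain_append] at hch
    rw [List.isChain_append, List.isChain_append]
    refine ⟨hch.1, ⟨hc, hch.2.1, ?_⟩, ?_⟩
    · simpa [hy] using hC
    · simpa [List.head?_append, hx] using hA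

/-- A longest path cannot be lengthened by inserting a detour and reversing a middle piece. -/
theorem IsLongestPathList.not_insert_reverse {A M C : List V}
    (hl : IsLongestPathList G (A ++ (M ++ C))) (hM : M ≠ [])
    {x y : V} (hxy : LinkedOff G (A ++ (M ++ C)) x y) (hA : ∀ a ∈ A.getLast?, G.Adj a x)
    (hyM : ∀ m ∈ M.getLast?, G.Adj y m) (hMC : ∀ m ∈ M.head?, ∀ c ∈ C.head?, G.Adj m c) :
    False := by
  obtain ⟨c, hc, hcd, hdis, hx, hy, hne⟩ := hxy.exists_path
  obtain ⟨hch, hnd, hmax⟩ := hl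
  have hp : (A ++ (c ++ (M.reverse ++ C))).Perm (c ++ (A ++ (M ++ C))) := by
    have h1 := (List.perm_append_comm (l₁ := A) (l₂ := c)).append_right (M.reverse ++ C)
    have h2 := ((M.reverse_perm.append_right C).append_left A).append_left c
    simpa using h1.trans (by simpa using h2)
  have key := hmax (A ++ (c ++ (M.reverse ++ C))) ?_ (hp.nodup_iff.2 (hcd.append hnd hdis))
  · have := List.length_pos_of_ne_nil hne
    simp only [List.length_append, List.length_reverse] at key
    omega
  · rw [List.isChain_append, List.isChain_append] at hch
    rw [List.isChain_append, List.isChain_append, List.isChain_append, List.isChain_reverse]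
    refine ⟨hch.1, ⟨hc, ⟨?_, hch.2.1.2.1, ?_⟩, ?_⟩, ?_⟩
    · exact hch.2.1.1.imp fun _ _ h => h.symm
    · simpa using hMC
    · rw [List.head?_append_of_ne_nil _ (by simpa using hM), List.head?_reverse]
      simpa [hy] using hyM
    · simpa [List.head?_append, hx] using hA

end LongestPath

section Connectivity

variable {V : Type*} [Fintype V] {G : SimpleGraph V} {k : ℕ}

/-- A property that passes along edges missing a small set of vertices holds off that set as soon
as it holds at one vertex. -/
theorem IsKConnected.induction_off (hconn : IsKConnected G k) {S : Finset V} (hS : S.card < k)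
    (Q : V → Prop) (hQ : ∀ x y, x ∉ S → y ∉ S → G.Adj x y → Q x → Q y) {x y : V}
    (hx : x ∉ S) (hy : y ∉ S) (h : Q x) : Q y := by
  obtain ⟨p⟩ := (hconn.2 S hS).preconnected ⟨x, by simpa using hx⟩ ⟨y, by simpa using hy⟩
  have key : ∀ (a b : ((↑S : Set V)ᶜ : Set V)), (G.induce (↑S : Set V)ᶜ).Walk a b →
      Q a → Q b := by
    intro a b q
    induction q with
    | nil => exact id
    | cons hadj _ ih =>
      rename_i u v w _
      exact fun hu => ih (hQ u v (fun hm => u.2 (mem_coe.2 hm))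
        (fun hm => v.2 (mem_coe.2 hm)) hadj hu)
  exact key _ _ p h

/-- In a `k`-connected graph, a vertex off a longest path together with the first vertex of that
path belongs to an independent set of size `k + 2`. -/
theorem IsLongestPathList.exists_indep {l : List V} (hl : IsLongestPathList G l)
    (hconn : IsKConnected G k) {s v : V} (hs : l.head? = some s) (hv : v ∉ l) :
    ∃ I : Finset V, I.card = k + 2 ∧ v ∈ I ∧ s ∈ I ∧ ∀ x ∈ I, ∀ y ∈ I, ¬ G.Adj x y := by
  classical
  have hpos : 0 < l.length := by
    rcases l with _ | ⟨a, l⟩ <;> simp_all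
  have hs0 : l[0] = s := by
    rw [List.head?_eq_getElem?, List.getElem?_eq_getElem hpos] at hs
    simpa using hs
  let R : V → Prop := fun w => ∃ h, LinkedOff G l v h ∧ G.Adj w h
  let T : Finset (Fin l.length) := univ.filter fun j => j.val = 0 ∨ R (l[j.val - 1])
  let z : Fin l.length := ⟨0, hpos⟩
  have hzT : z ∈ T := by simp [T, z]
  -- no path vertex indexed by `T` is adjacent to a vertex linked to `v` off the path
  have hnot : ∀ j ∈ T, ∀ h, LinkedOff G l v h → ¬ G.Adj h l[j.val] := by
    intro j hj h hh hadj
    have hsplit : l.take j ++ l.drop j = l := List.take_append_drop _ _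
    obtain ⟨x, hx, hxA⟩ : ∃ x, LinkedOff G l v x ∧ ∀ a ∈ (l.take j).getLast?, G.Adj a x := by
      rcases (mem_filter.1 hj).2 with h0 | ⟨x, hx, hax⟩
      · exact ⟨v, .refl hv, by simp [h0]⟩
      · exact ⟨x, hx, by grind⟩
    refine IsLongestPathList.not_insert (A := l.take j) (C := l.drop j) (by rwa [hsplit])
      (x := x) (y := h) (by rw [hsplit]; exact hx.symm.trans hh) hxA ?_
    rw [List.head?_drop, List.getElem?_eq_getElem j.2]
    simpa using hadj
  have hlast : ¬ R l[l.length - 1] := by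
    rintro ⟨h, hh, hadj⟩
    refine IsLongestPathList.not_insert (A := l) (C := []) (by simpa) (x := h) (y := h)
      (by simpa using LinkedOff.refl hh.right_notMem) ?_ (by simp)
    grind
  have hind : ∀ i ∈ T, ∀ j ∈ T, i < j → ¬ G.Adj l[i.val] l[j.val] := by
    intro i hi j hj hij hadj
    have hij' : i.val < j.val := hij
    have hj2 := j.2
    obtain ⟨y, hy, hyj⟩ : R (l[j.val - 1]) := by
      rcases (mem_filter.1 hj).2 with h0 | h0
      · omega
      · exact h0
    obtain ⟨x, hx, hxA⟩ : ∃ x, LinkedOff G l v x ∧ ∀ a ∈ (l.take i).getLast?, G.Adj a x := by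
      rcases (mem_filter.1 hi).2 with h0 | ⟨x, hx, hax⟩
      · exact ⟨v, .refl hv, by simp [h0]⟩
      · exact ⟨x, hx, by grind⟩
    have hsplit : l.take i ++ ((l.drop i).take (j - i) ++ l.drop j) = l := by
      have h1 : l.drop j = (l.drop i).drop (j - i) := by
        rw [List.drop_drop]; congr 1; omega
      rw [h1, List.take_append_drop, List.take_append_drop]
    refine IsLongestPathList.not_insert_reverse (A := l.take i) (M := (l.drop i).take (j - i))
      (C := l.drop j) (by rwa [hsplit]) ?_ (x := x) (y := y)
      (by rw [hsplit]; exact hx.symm.trans hy) hxA ?_ ?_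
    · apply List.ne_nil_of_length_pos
      simp
      omega
    · have : ((l.drop i).take (j - i)).getLast? = some l[j.val - 1] := by
        rw [List.getLast?_eq_getElem?]
        simp
        grind
      rw [this]
      simpa using hyj.symm
    · have h1 : ((l.drop i).take (j - i)).head? = some l[i.val] := by
        rw [List.head?_take, if_neg (by omega), List.head?_drop, List.getElem?_eq_getElem i.2]
      have h2 : (l.drop j).head? = some l[j.val] := by
        rw [List.head?_drop, List.getElem?_eq_getElem hj2]
      rw [h1, h2]
      simpa using hadj
  let N : Finset V := univ.filter fun w => w ∈ l ∧ R w
  have hN : k ≤ N.card := by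
    by_contra! hlt
    have hvN : v ∉ N := by simp [N, hv]
    have hsN : l[0] ∉ N := by
      simp only [N, mem_filter, not_and]
      rintro - - ⟨h, hh, hadj⟩
      exact hnot z hzT h hh hadj.symm
    have := hconn.induction_off hlt (fun w => LinkedOff G l v w) ?_ hvN hsN (.refl hv)
    · exact this.right_notMem (by simp)
    · intro x y _ hy hadj hx
      refine hx.adj_right hadj fun hyl => hy ?_
      simp only [N, mem_filter, mem_univ, true_and]
      exact ⟨hyl, x, hx, hadj.symm⟩
  have hNT : N ⊆ (T.erase z).image fun j => l[j.val - 1] := by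
    intro w hw
    simp only [N, mem_filter, mem_univ, true_and] at hw
    obtain ⟨hwl, hR⟩ := hw
    obtain ⟨i, hi, rfl⟩ := List.getElem_of_mem hwl
    have hi' : i + 1 < l.length := by
      by_contra hcon
      have : i = l.length - 1 := by omega
      subst this
      exact hlast hR
    refine mem_image.2 ⟨⟨i + 1, hi'⟩, ?_, by simp⟩
    simp [T, z, hR]
  have hT : k + 1 ≤ T.card := by
    have h1 := (card_le_card hNT).trans card_image_le
    rw [card_erase_of_mem hzT] at h1
    have := card_pos.2 ⟨z, hzT⟩
    omega
  let J : Finset V := T.image fun j => l[j.val]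
  have hJcard : J.card = T.card := by
    refine card_image_of_injective _ fun i j hij => Fin.ext ?_
    exact (hl.2.1.getElem_inj_iff).1 hij
  have hvJ : v ∉ J := by
    intro hmem
    obtain ⟨j, -, hj⟩ := mem_image.1 hmem
    exact hv (hj ▸ List.getElem_mem j.2)
  have hsJ : s ∈ J := mem_image.2 ⟨z, hzT, hs0⟩
  have hcard : k + 2 ≤ (insert v J).card := by
    rw [card_insert_of_notMem hvJ]; omega
  have hsub : ({v, s} : Finset V) ⊆ insert v J := by
    intro w; simp only [mem_insert, mem_singleton]; rintro (rfl | rfl)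
    exacts [.inl rfl, .inr hsJ]
  obtain ⟨I, hI1, hI2, hIc⟩ := exists_subsuperset_card_eq hsub
    (n := k + 2) (card_le_two.trans (by omega)) hcard
  refine ⟨I, hIc, hI1 (by simp), hI1 (by simp), fun x hx y hy hadj => ?_⟩
  rcases mem_insert.1 (hI2 hx) with rfl | hx <;> rcases mem_insert.1 (hI2 hy) with rfl | hy
  · exact hadj.ne rfl
  · obtain ⟨j, hj, rfl⟩ := mem_image.1 hy
    exact hnot j hj _ (.refl hv) hadj
  · obtain ⟨j, hj, rfl⟩ := mem_image.1 hx
    exact hnot j hj _ (.refl hv) hadj.symm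
  · obtain ⟨i, hi, rfl⟩ := mem_image.1 hx
    obtain ⟨j, hj, rfl⟩ := mem_image.1 hy
    rcases lt_trichotomy i j with hij | rfl | hij
    · exact hind i hi j hj hij hadj
    · exact hadj.ne rfl
    · exact hind j hj i hi hij hadj.symm

end Connectivity

/-- Along a path whose edges all cross `I`, the vertices off `I` are at most one more than those
in `I`, and no more than those if the path starts in `I`. -/
theorem List.IsChain.countP_notMem_le {V : Type*} [DecidableEq V] {G : SimpleGraph V}
    {I : Finset V} (hI : ∀ x y, G.Adj x y → (x ∈ I ↔ y ∉ I)) :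
    ∀ l : List V, l.IsChain G.Adj →
      l.countP (· ∉ I) ≤ l.countP (· ∈ I) + 1 ∧
        ∀ s ∈ l.head?, s ∈ I → l.countP (· ∉ I) ≤ l.countP (· ∈ I)
  | [], _ => by simp
  | a :: l, h => by
    obtain ⟨h1, h2⟩ := List.IsChain.countP_notMem_le hI l h.tail
    by_cases ha : a ∈ I
    · simp only [List.countP_cons, ha, not_true_eq_false, decide_true, decide_false, if_true,
        Bool.false_eq_true, if_false]
      exact ⟨by omega, fun _ _ _ => by omega⟩
    · have : l.countP (· ∉ I) ≤ l.countP (· ∈ I) := by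
        rcases l with _ | ⟨b, l⟩
        · simp
        · have hab := (List.isChain_cons_cons.1 h).1
          refine h2 b (by simp) ?_
          have := hI a b hab
          tauto
      simp only [List.countP_cons, ha, not_false_eq_true, decide_true, decide_false, if_true,
        Bool.false_eq_true, if_false]
      refine ⟨by omega, fun s hs hsI => absurd hsI ?_⟩
      simp only [List.head?_cons, Option.mem_some_iff] at hs
      exact hs ▸ ha

section DegreeSum

variable {V : Type*} [Fintype V] [DecidableEq V] {G : SimpleGraph V} [DecidableRel G.Adj]
  {I : Finset V}

theorem card_biUnion_incidenceFinset (hI : ∀ x ∈ I, ∀ y ∈ I, ¬ G.Adj x y) :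
    (I.biUnion fun u => G.incidenceFinset u).card = ∑ u ∈ I, G.degree u := by
  rw [card_biUnion]
  · simp
  · intro x hx y hy hxy
    refine disjoint_left.2 fun e he he' => ?_
    rw [SimpleGraph.mem_incidenceFinset] at he he'
    have := G.incidenceSet_inter_incidenceSet_of_not_adj (hI x hx y hy) hxy
    exact (this ▸ (⟨he, he'⟩ : e ∈ G.incidenceSet x ∩ G.incidenceSet y) : e ∈ (∅ : Set _))

theorem biUnion_incidenceFinset_subset :
    (I.biUnion fun u => G.incidenceFinset u) ⊆ G.edgeFinset :=
  biUnion_subset.2 fun u _ => G.incidenceFinset_subset u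

theorem sum_degree_le_card_edgeFinset (hI : ∀ x ∈ I, ∀ y ∈ I, ¬ G.Adj x y) :
    ∑ u ∈ I, G.degree u ≤ G.edgeFinset.card :=
  card_biUnion_incidenceFinset hI ▸ card_le_card biUnion_incidenceFinset_subset

/-- If the degrees of an independent set add up to the number of edges, every edge crosses it. -/
theorem adj_crosses_of_card_edgeFinset_le (hI : ∀ x ∈ I, ∀ y ∈ I, ¬ G.Adj x y)
    (h : G.edgeFinset.card ≤ ∑ u ∈ I, G.degree u) {x y : V} (hxy : G.Adj x y) :
    x ∈ I ↔ y ∉ I := by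
  refine ⟨fun hx hy => hI x hx y hy hxy, fun hy => ?_⟩
  have heq := eq_of_subset_of_card_le (biUnion_incidenceFinset_subset (G := G) (I := I))
    (card_biUnion_incidenceFinset hI ▸ h)
  have hmem : s(x, y) ∈ G.edgeFinset := by simpa using hxy
  rw [← heq, mem_biUnion] at hmem
  obtain ⟨u, hu, he⟩ := hmem
  rw [SimpleGraph.mem_incidenceFinset] at he
  rcases Sym2.mem_iff.1 he.2 with rfl | rfl
  exacts [hu, absurd hu hy]

/-- Under the inverse degree bound, an independent set of size `k + 2` is one side of a balanced
bipartition. -/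
theorem balanced_bipartition_of_invDegree_le {k : ℕ} (hδ : 1 ≤ G.minDegree)
    (h : invDegree G ≤ ((Fintype.card V : ℝ) - k - 2) / (G.maxDegree : ℝ)
        + (2 * ((k : ℝ) + 2) ^ 2 * (G.minDegree : ℝ) ^ 2 - (G.edgeFinset.card : ℝ) ^ 2)
          / (((k : ℝ) + 2) * (G.maxDegree : ℝ) ^ 3))
    (hIc : I.card = k + 2) (hI : ∀ x ∈ I, ∀ y ∈ I, ¬ G.Adj x y) :
    Fintype.card V = 2 * (k + 2) ∧ ∀ x y, G.Adj x y → (x ∈ I ↔ y ∉ I) := by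
  have hδΔ : G.minDegree ≤ G.maxDegree := G.minDegree_le_maxDegree
  have hsum := sum_degree_le_card_edgeFinset hI
  have hlow : (k + 2) * G.minDegree ≤ ∑ u ∈ I, G.degree u := by
    have := card_nsmul_le_sum I (fun u => G.degree u) G.minDegree
      fun u _ => G.minDegree_le_degree u
    simpa [hIc] using this
  have hinv : (Fintype.card V : ℝ) / G.maxDegree ≤ invDegree G := by
    have := card_nsmul_le_sum univ (fun u => 1 / (G.degree u : ℝ)) (1 / (G.maxDegree : ℝ))
      fun u _ => by
        have h1 : 0 < G.degree u := hδ.trans (G.minDegree_le_degree u)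
        exact one_div_le_one_div_of_le (by exact_mod_cast h1)
          (by exact_mod_cast G.degree_le_maxDegree u)
    simpa [invDegree, div_eq_mul_inv] using this
  have hm : (0 : ℝ) < (k : ℝ) + 2 := by positivity
  have hδ' : (1 : ℝ) ≤ G.minDegree := by exact_mod_cast hδ
  have hδΔ' : (G.minDegree : ℝ) ≤ G.maxDegree := by exact_mod_cast hδΔ
  have he' : ((k : ℝ) + 2) * G.minDegree ≤ G.edgeFinset.card := by
    exact_mod_cast hlow.trans hsum
  have hD : (0 : ℝ) < G.maxDegree := by linarith
  have hmain : (((k : ℝ) + 2) * G.maxDegree) ^ 2 + (G.edgeFinset.card : ℝ) ^ 2 ≤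
      2 * (((k : ℝ) + 2) * G.minDegree) ^ 2 := by
    have h1 : ((k : ℝ) + 2) / G.maxDegree ≤
        (2 * ((k : ℝ) + 2) ^ 2 * (G.minDegree : ℝ) ^ 2 - (G.edgeFinset.card : ℝ) ^ 2)
          / (((k : ℝ) + 2) * (G.maxDegree : ℝ) ^ 3) := by
      have h2 := hinv.trans h
      have h3 : ((Fintype.card V : ℝ) - k - 2) / (G.maxDegree : ℝ) =
        (Fintype.card V : ℝ) / G.maxDegree - ((k : ℝ) + 2) / G.maxDegree := by ring
      linarith
    rw [div_le_div_iff₀ hD (by positivity)] at h1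
    have h4 : (((k : ℝ) + 2) * G.maxDegree) ^ 2 * G.maxDegree ≤
        (2 * ((k : ℝ) + 2) ^ 2 * (G.minDegree : ℝ) ^ 2 - (G.edgeFinset.card : ℝ) ^ 2)
          * G.maxDegree := by
      linarith
    have := le_of_mul_le_mul_right h4 hD
    linarith
  have hmδ : 0 ≤ ((k : ℝ) + 2) * G.minDegree := by positivity
  have hmδΔ := mul_le_mul_of_nonneg_left hδΔ' hm.le
  have hΔeq : (G.maxDegree : ℝ) = G.minDegree := by
    have : ((k : ℝ) + 2) * G.maxDegree ≤ ((k : ℝ) + 2) * G.minDegree := by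
      refine le_of_sq_le_sq ?_ hmδ
      linarith [pow_le_pow_left₀ hmδ he' 2]
    exact le_antisymm (le_of_mul_le_mul_left this hm) hδΔ'
  have heeq : (G.edgeFinset.card : ℝ) = ((k : ℝ) + 2) * G.minDegree := by
    refine le_antisymm (le_of_sq_le_sq ?_ hmδ) he'
    linarith [pow_le_pow_left₀ hmδ hmδΔ 2]
  have hΔeqN : G.maxDegree = G.minDegree := by exact_mod_cast hΔeq
  have heeqN : G.edgeFinset.card = (k + 2) * G.minDegree := by exact_mod_cast heeq
  refine ⟨?_, fun x y hxy => adj_crosses_of_card_edgeFinset_le hI (heeqN ▸ hlow) hxy⟩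
  have hreg : ∀ u, G.degree u = G.minDegree := fun u =>
    le_antisymm (hΔeqN ▸ G.degree_le_maxDegree u) (G.minDegree_le_degree u)
  have hds := G.sum_degrees_eq_twice_card_edges
  simp only [hreg, sum_const, card_univ, smul_eq_mul] at hds
  rw [heeqN, ← mul_assoc] at hds
  exact Nat.eq_of_mul_eq_mul_right hδ hds

end DegreeSum

/-- If `G` is a `k`-connected (`k ≥ 1`) graph with `n ≥ 9` vertices, `e` edges, minimum degree
`δ ≥ 1`, and maximum degree `Δ`, and `Inv(G) ≤ (n − k − 2)/Δ + (2(k+2)²δ² − e²)/((k+2)Δ³)`,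
then `G` is traceable. -/
theorem stmt14 {V : Type*} [Fintype V] [DecidableEq V] (G : SimpleGraph V) [DecidableRel G.Adj]
    (k : ℕ) (hk : 1 ≤ k) (hconn : IsKConnected G k) (hn : 9 ≤ Fintype.card V)
    (hδ : 1 ≤ G.minDegree)
    (h : invDegree G ≤ ((Fintype.card V : ℝ) - k - 2) / (G.maxDegree : ℝ)
        + (2 * ((k : ℝ) + 2) ^ 2 * (G.minDegree : ℝ) ^ 2 - (G.edgeFinset.card : ℝ) ^ 2)
          / (((k : ℝ) + 2) * (G.maxDegree : ℝ) ^ 3)) :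
    IsTraceable G := by
  obtain ⟨l, hl⟩ := exists_isLongestPathList G
  have hne : l ≠ [] := by
    rintro rfl
    obtain ⟨v⟩ : Nonempty V := Fintype.card_pos_iff.1 (by omega)
    simpa using hl.2.2 [v] (by simp) (by simp)
  by_cases hall : ∀ v, v ∈ l
  · refine ⟨_, _, SimpleGraph.Walk.ofSupport l hne hl.1, fun a => ?_⟩
    rw [SimpleGraph.Walk.support_ofSupport]
    exact List.count_eq_one_of_mem hl.2.1 (hall a)
  exfalso
  push Not at hall
  obtain ⟨v, hv⟩ := hall
  obtain ⟨s, hs⟩ : ∃ s, l.head? = some s := ⟨_, List.head?_eq_some_head hne⟩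
  obtain ⟨I, hIc, hvI, hsI, hI⟩ := hl.exists_indep hconn hs hv
  obtain ⟨hcard, hcross⟩ := balanced_bipartition_of_invDegree_le hδ h hIc hI
  have hoff : ∀ w, w ∉ l → w ∈ I := by
    intro w hw
    obtain ⟨J, hJc, hwJ, hsJ, hJ⟩ := hl.exists_indep hconn hs hw
    have hcrossJ := (balanced_bipartition_of_invDegree_le hδ h hJc hJ).2
    refine (hconn.induction_off (S := ∅) (by rw [card_empty]; omega) (fun u => u ∈ I ↔ u ∈ J) ?_
      (by simp) (by simp) (iff_of_true hsI hsJ) : w ∈ I ↔ w ∈ J).2 hwJ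
    intro x y _ _ hxy hx
    have h1 := hcross x y hxy
    have h2 := hcrossJ x y hxy
    tauto
  have hcount := (List.IsChain.countP_notMem_le hcross l hl.1).2 s hs hsI
  have hcompl : k + 2 ≤ l.countP (· ∉ I) := by
    have h1 : Iᶜ ⊆ (l.filter (· ∉ I)).toFinset := by
      intro w hw
      have hw' : w ∉ I := mem_compl.1 hw
      have : w ∈ l := by_contra fun hwl => hw' (hoff w hwl)
      simp [hw', this]
    have h2 := (card_le_card h1).trans (List.toFinset_card_le _)
    rw [card_compl, hcard, hIc, ← List.countP_eq_length_filter] at h2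
    omega
  have hle : l.countP (· ∈ I) ≤ k + 1 := by
    have h1 : (l.filter (· ∈ I)).toFinset ⊆ I.erase v := by
      intro w hw
      simp only [List.mem_toFinset, List.mem_filter, decide_eq_true_eq] at hw
      exact mem_erase.2 ⟨fun hwv => hv (hwv ▸ hw.1), hw.2⟩
    have h2 := card_le_card h1
    rw [List.toFinset_card_of_nodup (hl.2.1.filter _), card_erase_of_mem hvI, hIc,
      ← List.countP_eq_length_filter] at h2
    omega
  omega
end
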